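/- Let F be a field of characteristic zero and k ≥ 2. The differential PI-exponent of M_k(F) with respect to the Lie algebra of all its derivations equals k²: the limit as n → ∞ of the n-th root of c_n^L(M_k(F)) = k^{2(n+1)} − (k² − 1)(n + 1) exists and equals k². -/

import Mathlib

/-- `U`: the unital subalgebra of `End_F(M_k(F))` generated by the inner derivations
`ad_a = L_a − R_a`, `a ∈ M_k(F)`. -/
noncomputable def innerDerivationsAlgebra (F : Type*) [Field F] (k : ℕ) :
    Subalgebra F (Module.End F (Matrix (Fin k) (Fin k) F)) :=
  Algebra.adjoin F (Set.range fun a : Matrix (Fin k) (Fin k) F =>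
    LinearMap.mulLeft F a - LinearMap.mulRight F a)

/-- The space of multilinear maps `M_k(F)^n → M_k(F)` spanned by the maps
`(x_1, …, x_n) ↦ u_1(x_{σ(1)})·u_2(x_{σ(2)})⋯u_n(x_{σ(n)})` over all permutations `σ ∈ S_n`
and all `u_1, …, u_n ∈ U`; its dimension is the `n`-th differential codimension
`c_n^L(M_k(F))`. -/
noncomputable def diffMultilinearSpan (F : Type*) [Field F] (k n : ℕ) :
    Submodule F (MultilinearMap F (fun _ : Fin n => Matrix (Fin k) (Fin k) F)
      (Matrix (Fin k) (Fin k) F)) :=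
  Submodule.span F
    {g | ∃ (σ : Equiv.Perm (Fin n)) (u : Fin n → innerDerivationsAlgebra F k),
        g = MultilinearMap.domDomCongr σ
          ((MultilinearMap.mkPiAlgebraFin F n (Matrix (Fin k) (Fin k) F)).compLinearMap
            fun i => (u i : Module.End F (Matrix (Fin k) (Fin k) F)))}

/-!
Suppose that the characteristic of `F` does not divide `k`, so that `M_k(F) = F • 1 ⊕ sl_k(F)`.
A Casimir-type identity shows that `sl_k(F)` has no proper nonzero subspace stable under all inner
derivations. The algebra `U` contains one operator of rank one, hence, moving its functional and
its vector around by inner derivations, every operator `x ↦ f x • a` with `f 1 = 0` and `tr a = 0`.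
Therefore `U` consists of all the operators that preserve both `F • 1` and `sl_k(F)`.

Consequently the maps `u₁(x_σ(1)) ⋯ u_n(x_σ(n))` span the space of all multilinear maps that send
a word with `s` letters in `sl_k(F)`, and all other letters equal to `1`, into `sl_k(F) ^ s`. This
power is everything once `s ≥ 2`, so the only constraints come from the single word with `s = 0`
(codimension `k ^ 2 - 1`) and from the `n * (k ^ 2 - 1)` basis words with `s = 1` (codimension `1`).
-/

open Matrix Module Filter Topology

namespace DifferentialCodimension

section TraceZero

variable (m R : Type*) [Fintype m] [CommRing R]

/-- The space `sl_m(R)` of square matrices of trace zero, as a plain submodule so that its powers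
can be taken in the algebra of submodules of the matrix algebra. -/
abbrev traceZero : Submodule R (Matrix m m R) :=
  LinearMap.ker (traceLinearMap m R R)

/-- The trace form `(y, x) ↦ tr (y * x)`, as the linear map sending `y` to a functional of `x`. -/
def traceForm : Matrix m m R →ₗ[R] Dual R (Matrix m m R) :=
  (LinearMap.mul R (Matrix m m R)).compr₂ (traceLinearMap m R R)

variable {m R}

theorem mem_traceZero {x : Matrix m m R} : x ∈ traceZero m R ↔ x.trace = 0 :=
  Iff.rfl

theorem traceForm_apply (y x : Matrix m m R) : traceForm m R y x = (y * x).trace :=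
  rfl

theorem traceForm_surjective : Function.Surjective (traceForm m R) := by
  classical
  intro f
  refine ⟨of fun i j => f (single j i 1), ext_linearMap _ fun i j => LinearMap.ext_ring ?_⟩
  simp [traceForm_apply, trace_mul_single]

variable [DecidableEq m]

theorem single_mem_traceZero {i j : m} (hij : i ≠ j) (r : R) : single i j r ∈ traceZero m R :=
  trace_single_eq_of_ne i j r hij

theorem single_sub_single_mem_traceZero (i j : m) (r : R) :
    single i i r - single j j r ∈ traceZero m R := by
  rw [mem_traceZero, trace_sub, trace_single_eq_same, trace_single_eq_same, sub_self]

theorem traceZero_mul_traceZero [Nontrivial m] : traceZero m R * traceZero m R = ⊤ := by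
  refine eq_top_iff.2 fun x _ => ?_
  induction x using Matrix.induction_on' with
  | h_zero => exact zero_mem _
  | h_add x y hx hy => exact add_mem (hx trivial) (hy trivial)
  | h_std_basis i j r =>
    obtain rfl | hij := eq_or_ne i j
    · obtain ⟨l, hl⟩ := exists_ne i
      have h : single i i r = single i l 1 * single l i r := by
        rw [single_mul_single_same, one_mul]
      exact h ▸ Submodule.mul_mem_mul (single_mem_traceZero hl.symm 1) (single_mem_traceZero hl r)
    · have h : single i j r = (single i i 1 - single j j 1) * single i j r := by
        rw [sub_mul, single_mul_single_same, single_mul_single_of_ne _ _ _ _ hij.symm, one_mul,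
          sub_zero]
      exact h ▸ Submodule.mul_mem_mul (single_sub_single_mem_traceZero i j 1)
        (single_mem_traceZero hij r)

theorem traceZero_pow_add_two [Nontrivial m] (s : ℕ) : traceZero m R ^ (s + 2) = ⊤ := by
  induction s with
  | zero => rw [zero_add, pow_two, traceZero_mul_traceZero]
  | succ s ih =>
    rw [Nat.add_right_comm, pow_succ, ih, eq_top_iff]
    exact traceZero_mul_traceZero.symm.le.trans (mul_le_mul_left le_top _)

end TraceZero

section AdStable

variable {m R : Type*} [Fintype m] [DecidableEq m] [CommRing R]

theorem sum_single_mul_mul_single (y : Matrix m m R) :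
    ∑ i, ∑ j, single i j 1 * y * single j i 1 = y.trace • (1 : Matrix m m R) := by
  simp only [single_mul_mul_single, one_mul, mul_one, smul_one_eq_diagonal,
    ← sum_single_eq_diagonal]
  exact Finset.sum_congr rfl fun i _ => (map_sum (singleLinearMap R i i) _ _).symm

/-- A Casimir-type sum: it isolates `card m • (c * x)`, so that a subspace stable under all
commutators is stable under left multiplication by `c` up to scalar matrices. -/
theorem sum_commutator_single (c x : Matrix m m R) :
    ∑ i, ∑ j, (single i j 1 * (single j i 1 * c * x - x * (single j i 1 * c)) -
        (single j i 1 * c * x - x * (single j i 1 * c)) * single i j 1) =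
      (Fintype.card m : R) • (c * x) - x.trace • c - (c * x).trace • 1 + c.trace • x := by
  have hcard : ∑ i : m, ∑ j : m, single i j (1 : R) * 1 * single j i 1 =
    (Fintype.card m : R) • (1 : Matrix m m R) := by rw [sum_single_mul_mul_single, trace_one]
  have hcx := Finset.sum_comm.trans (sum_single_mul_mul_single (c * x))
  have hc := Finset.sum_comm.trans (sum_single_mul_mul_single c)
  calc _ = (∑ i : m, ∑ j : m, single i j (1 : R) * 1 * single j i 1) * (c * x)
          - (∑ i, ∑ j, single i j 1 * x * single j i 1) * c
          - ∑ i, ∑ j, single j i 1 * (c * x) * single i j 1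
          + x * ∑ i, ∑ j, single j i 1 * c * single i j 1 := by
        simp only [Finset.sum_mul, Finset.mul_sum, ← Finset.sum_sub_distrib,
          ← Finset.sum_add_distrib]
        refine Finset.sum_congr rfl fun i _ => Finset.sum_congr rfl fun j _ => ?_
        noncomm_ring
    _ = _ := by
        rw [hcard, sum_single_mul_mul_single, hcx, hc]
        simp

theorem card_smul_mul_sub_trace_smul_one_mem {N : Submodule R (Matrix m m R)}
    (hN : ∀ a, ∀ x ∈ N, a * x - x * a ∈ N) {x : Matrix m m R} (hx : x ∈ N) (htr : x.trace = 0)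
    (c : Matrix m m R) :
    (Fintype.card m : R) • (c * x) - (c * x).trace • (1 : Matrix m m R) ∈ N := by
  have hsum := N.sum_mem fun i (_ : i ∈ Finset.univ) => N.sum_mem fun j (_ : j ∈ Finset.univ) =>
    hN (single i j 1) _ (hN (single j i 1 * c) x hx)
  rw [sum_commutator_single, htr, zero_smul, sub_zero] at hsum
  exact (N.add_mem_iff_left (N.smul_mem _ hx)).1 hsum

end AdStable

section Simplicity

variable {m F : Type*} [Fintype m] [Field F]

theorem single_mem_of_ad_stable [DecidableEq m] (hm : (Fintype.card m : F) ≠ 0)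
    {N : Submodule F (Matrix m m F)} (hN : ∀ a, ∀ x ∈ N, a * x - x * a ∈ N) {x : Matrix m m F}
    (hx : x ∈ N) (htr : x.trace = 0) (hx0 : x ≠ 0) {i j : m} (hij : i ≠ j) : single i j 1 ∈ N := by
  obtain ⟨p, q, hpq⟩ : ∃ p q, x p q ≠ 0 := by
    contrapose! hx0
    exact Matrix.ext hx0
  have hcomm := N.neg_mem
    (hN (single q j 1) _ (card_smul_mul_sub_trace_smul_one_mem hN hx htr (single i p 1)))
  have heq : -(single q j 1 * ((Fintype.card m : F) • (single i p 1 * x) -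
        (single i p 1 * x).trace • 1) - ((Fintype.card m : F) • (single i p 1 * x) -
        (single i p 1 * x).trace • 1) * single q j 1) =
      ((Fintype.card m : F) * x p q) • single i j 1 := by
    rw [mul_sub, sub_mul, mul_smul_comm, smul_mul_assoc, ← mul_assoc,
      single_mul_single_of_ne _ _ _ _ hij.symm, single_mul_mul_single]
    simp [smul_single]
  rw [heq] at hcomm
  exact (N.smul_mem_iff (mul_ne_zero hm hpq)).1 hcomm

theorem traceZero_le_of_ad_stable (hm : (Fintype.card m : F) ≠ 0)
    {N : Submodule F (Matrix m m F)} (hN : ∀ a, ∀ x ∈ N, a * x - x * a ∈ N) {x : Matrix m m F}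
    (hx : x ∈ N) (htr : x.trace = 0) (hx0 : x ≠ 0) : traceZero m F ≤ N := by
  classical
  have : Nontrivial m := by
    by_contra h
    rw [not_nontrivial_iff_subsingleton] at h
    refine hx0 (Matrix.ext fun i j => ?_)
    obtain rfl := Subsingleton.elim i j
    exact (Fintype.sum_subsingleton (fun l => x l l) i).symm.trans htr
  have hproj (z : Matrix m m F) : (Fintype.card m : F) • z - z.trace • (1 : Matrix m m F) ∈ N := by
    induction z using Matrix.induction_on' with
    | h_zero => simp
    | h_add z w hz hw =>
      convert N.add_mem hz hw using 1
      rw [trace_add, smul_add, add_smul]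
      abel
    | h_std_basis i j r =>
      obtain ⟨l, hlj⟩ := exists_ne j
      have h := card_smul_mul_sub_trace_smul_one_mem hN
        (single_mem_of_ad_stable hm hN hx htr hx0 hlj) (trace_single_eq_of_ne l j 1 hlj)
        (single i l r)
      rwa [single_mul_single_same, mul_one] at h
  intro y hy
  have h := hproj y
  rw [mem_traceZero.1 hy, zero_smul, sub_zero] at h
  exact (N.smul_mem_iff hm).1 h

end Simplicity

section InnerDerivations

variable {F : Type*} [Field F] {k : ℕ}

theorem ad_mem_innerDerivationsAlgebra (a : Matrix (Fin k) (Fin k) F) :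
    LinearMap.mulLeft F a - LinearMap.mulRight F a ∈ innerDerivationsAlgebra F k :=
  Algebra.subset_adjoin ⟨a, rfl⟩

theorem smulRight_commutator_mem {f : Dual F (Matrix (Fin k) (Fin k) F)}
    {a : Matrix (Fin k) (Fin k) F} (h : f.smulRight a ∈ innerDerivationsAlgebra F k)
    (c : Matrix (Fin k) (Fin k) F) :
    f.smulRight (c * a - a * c) ∈ innerDerivationsAlgebra F k := by
  convert mul_mem (ad_mem_innerDerivationsAlgebra c) h using 1
  ext1 x
  simp [smul_sub]

theorem traceForm_commutator_smulRight_mem {y a : Matrix (Fin k) (Fin k) F}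
    (h : (traceForm (Fin k) F y).smulRight a ∈ innerDerivationsAlgebra F k)
    (c : Matrix (Fin k) (Fin k) F) :
    (traceForm (Fin k) F (c * y - y * c)).smulRight a ∈ innerDerivationsAlgebra F k := by
  convert mul_mem h (neg_mem (ad_mem_innerDerivationsAlgebra c)) using 1
  refine LinearMap.ext fun x => ?_
  have htrace : ((c * y - y * c) * x).trace = (y * -(c * x - x * c)).trace := by
    rw [sub_mul, trace_sub, mul_assoc, trace_mul_comm, mul_neg, mul_sub, neg_sub, trace_sub,
      mul_assoc, mul_assoc]
  simp only [LinearMap.smulRight_apply, traceForm_apply, htrace, Module.End.mul_apply,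
    LinearMap.neg_apply, LinearMap.sub_apply, LinearMap.mulLeft_apply, LinearMap.mulRight_apply]

theorem traceForm_single_smulRight_mem {i j : Fin k} (hij : i ≠ j) :
    (traceForm (Fin k) F (single i j 1)).smulRight (single i i 1 - single j j 1) ∈
      innerDerivationsAlgebra F k := by
  let ad (a : Matrix (Fin k) (Fin k) F) := LinearMap.mulLeft F a - LinearMap.mulRight F a
  -- The operator is `ad e_ij * ad e_ii * (-ad e_jj)`: the last two factors cut out the
  -- `(i, j)` and `(j, i)` entries, and `ad e_ij` kills the former.
  have hmem : ad (single i j 1) * ad (single i i 1) * -ad (single j j 1) ∈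
      innerDerivationsAlgebra F k :=
    mul_mem (mul_mem (ad_mem_innerDerivationsAlgebra _) (ad_mem_innerDerivationsAlgebra _))
      (neg_mem (ad_mem_innerDerivationsAlgebra _))
  convert hmem using 1
  refine LinearMap.ext fun x => ?_
  have hii_jj : single i i (1 : F) * single j j 1 = 0 := single_mul_single_of_ne _ _ _ _ hij _
  have hjj_ii : single j j (1 : F) * single i i 1 = 0 := single_mul_single_of_ne _ _ _ _ hij.symm _
  have had : ad (single i i 1) (-ad (single j j 1) x) = single i j (x i j) + single j i (x j i) :=
    calc _ = single i i 1 * x * single j j 1 + single j j 1 * x * single i i 1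
          - single i i 1 * single j j 1 * x - x * (single j j 1 * single i i 1) := by
          simp only [ad, LinearMap.sub_apply, LinearMap.mulLeft_apply, LinearMap.mulRight_apply]
          noncomm_ring
      _ = _ := by
          rw [hii_jj, hjj_ii, single_mul_mul_single, single_mul_mul_single]
          simp
  simp only [Module.End.mul_apply, LinearMap.neg_apply]
  rw [had]
  simp [ad, traceForm_apply, mul_add, add_mul, trace_single_mul, smul_sub, smul_single,
    single_mul_single_of_ne _ _ _ _ hij.symm]

theorem traceForm_smulRight_mem (hk : 2 ≤ k) (hkF : (Fintype.card (Fin k) : F) ≠ 0)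
    {y a : Matrix (Fin k) (Fin k) F} (hy : y ∈ traceZero (Fin k) F)
    (ha : a ∈ traceZero (Fin k) F) :
    (traceForm (Fin k) F y).smulRight a ∈ innerDerivationsAlgebra F k := by
  have : Nontrivial (Fin k) := Fin.nontrivial_iff_two_le.2 hk
  obtain ⟨i, j, hij⟩ := exists_pair_ne (Fin k)
  let U := Subalgebra.toSubmodule (innerDerivationsAlgebra F k)
  have hsub : single i i (1 : F) - single j j 1 ≠ 0 := fun h => by
    simpa [single_apply, hij.symm] using congrFun₂ h i i
  have hsingle : single i j (1 : F) ≠ 0 := fun h => by simpa using congrFun₂ h i j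
  have hvector : traceZero (Fin k) F ≤
      U.comap (LinearMap.smulRightₗ (traceForm (Fin k) F (single i j 1))) :=
    traceZero_le_of_ad_stable hkF (fun c _ h => smulRight_commutator_mem h c)
      (traceForm_single_smulRight_mem hij) (single_sub_single_mem_traceZero i j 1) hsub
  have hfunctional : traceZero (Fin k) F ≤
      U.comap ((LinearMap.smulRightₗ.flip a) ∘ₗ traceForm (Fin k) F) :=
    traceZero_le_of_ad_stable hkF (fun c _ h => traceForm_commutator_smulRight_mem h c)
      (hvector ha) (single_mem_traceZero hij 1) hsingle
  exact hfunctional hy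

theorem smulRight_mem_of_map_one_eq_zero (hk : 2 ≤ k) (hkF : (Fintype.card (Fin k) : F) ≠ 0)
    {f : Dual F (Matrix (Fin k) (Fin k) F)} (hf : f 1 = 0) {a : Matrix (Fin k) (Fin k) F}
    (ha : a ∈ traceZero (Fin k) F) : f.smulRight a ∈ innerDerivationsAlgebra F k := by
  obtain ⟨y, rfl⟩ := traceForm_surjective f
  rw [traceForm_apply, mul_one] at hf
  exact traceForm_smulRight_mem hk hkF hf ha

theorem map_mem_of_ad_stable {N : Submodule F (Matrix (Fin k) (Fin k) F)}
    (hN : ∀ a, ∀ x ∈ N, a * x - x * a ∈ N) {u : End F (Matrix (Fin k) (Fin k) F)}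
    (hu : u ∈ innerDerivationsAlgebra F k) {x : Matrix (Fin k) (Fin k) F} (hx : x ∈ N) :
    u x ∈ N := by
  induction hu using Algebra.adjoin_induction generalizing x with
  | mem _ h =>
    obtain ⟨a, rfl⟩ := h
    exact hN a x hx
  | algebraMap r => exact N.smul_mem r hx
  | add _ _ _ _ hu hv => exact N.add_mem (hu hx) (hv hx)
  | mul _ _ _ _ hu hv => exact hu (hv hx)

end InnerDerivations

section AdaptedBasis

variable {m F : Type*} [Fintype m] [Field F]

theorem matrix_one_ne_zero [DecidableEq m] (hm : (Fintype.card m : F) ≠ 0) :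
    (1 : Matrix m m F) ≠ 0 := fun h => hm <| by
  rw [← trace_one, h, trace_zero]

theorem isCompl_span_one_traceZero [DecidableEq m] (hm : (Fintype.card m : F) ≠ 0) :
    IsCompl (F ∙ (1 : Matrix m m F)) (traceZero m F) := by
  have htrace : traceLinearMap m F F 1 ≠ 0 := by rwa [traceLinearMap_apply, trace_one]
  refine (Module.Dual.isCompl_ker_of_disjoint_of_ne_bot ?_ ?_ ?_).symm
  · exact fun h => htrace (by rw [h, LinearMap.zero_apply])
  · exact (Submodule.disjoint_span_singleton' (matrix_one_ne_zero hm)).2 htrace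
  · exact Submodule.span_singleton_eq_bot.not.2 (matrix_one_ne_zero hm)

theorem finrank_traceZero_add_one (hm : (Fintype.card m : F) ≠ 0) :
    finrank F (traceZero m F) + 1 = Fintype.card m ^ 2 := by
  classical
  have h := Submodule.finrank_add_eq_of_isCompl (isCompl_span_one_traceZero hm)
  rwa [finrank_span_singleton (matrix_one_ne_zero hm), finrank_matrix, finrank_self, mul_one,
    ← pow_two, add_comm] at h

variable [DecidableEq m]

/-- A basis of `M_m(F)` consisting of the identity matrix and a basis of the trace-zero matrices,
available when the characteristic of `F` does not divide the size of the matrices. -/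
noncomputable def adaptedBasis (hm : (Fintype.card m : F) ≠ 0) :
    Basis (Unit ⊕ Fin (finrank F (traceZero m F))) F (Matrix m m F) :=
  (((Basis.singleton Unit F).map
      (LinearEquiv.toSpanNonzeroSingleton F _ 1 (matrix_one_ne_zero hm))).prod
    (finBasis F (traceZero m F))).map
    (Submodule.prodEquivOfIsCompl _ _ (isCompl_span_one_traceZero hm))

theorem adaptedBasis_inl (hm : (Fintype.card m : F) ≠ 0) (t : Unit) :
    adaptedBasis hm (Sum.inl t) = 1 := by
  simp [adaptedBasis, Basis.prod_apply]

theorem adaptedBasis_inr_mem (hm : (Fintype.card m : F) ≠ 0)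
    (j : Fin (finrank F (traceZero m F))) : adaptedBasis hm (Sum.inr j) ∈ traceZero m F := by
  simp [adaptedBasis, Basis.prod_apply]

end AdaptedBasis

section Weight

variable {J : Type*}

/-- The weight of an index of a basis adapted to `M_m(F) = F • 1 ⊕ sl_m(F)`: the exponent `s` for
which the basis vector lies in `sl ^ s`. -/
def weight : Unit ⊕ J → ℕ :=
  Sum.elim (fun _ => 0) (fun _ => 1)

/-- The words of weight `0` and `1` number `1` and `n * card J`. -/
theorem sum_apply_sum_weight [Fintype J] {M : Type*} [AddCommMonoid M] {h : ℕ → M}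
    (hh : ∀ s, h (s + 2) = 0) (n : ℕ) :
    ∑ v : Fin n → Unit ⊕ J, h (∑ i, weight (v i)) = h 0 + (n * Fintype.card J) • h 1 := by
  induction n generalizing h with
  | zero => simp
  | succ n ih =>
    have hshift (s : ℕ) : h (1 + (s + 2)) = 0 := by rw [← add_assoc, hh]
    calc ∑ v : Fin (n + 1) → Unit ⊕ J, h (∑ i, weight (v i))
        = ∑ v : Fin n → Unit ⊕ J, h (∑ i, weight (v i)) +
            Fintype.card J • ∑ v : Fin n → Unit ⊕ J, h (1 + ∑ i, weight (v i)) := by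
          rw [← (Fin.consEquiv fun _ => Unit ⊕ J).sum_comp, Fintype.sum_prod_type]
          simp [Fin.consEquiv_apply, Fin.sum_univ_succ, weight]
      _ = h 0 + ((n + 1) * Fintype.card J) • h 1 := by
          rw [ih hh, ih (h := fun s => h (1 + s)) hshift, hh 0, smul_zero, add_zero, add_zero,
            add_assoc, ← add_smul, add_one_mul]

theorem list_prod_ofFn_pow {R : Type*} [Monoid R] (x : R) {n : ℕ} (w : Fin n → ℕ) :
    (List.ofFn fun i => x ^ w i).prod = x ^ ∑ i, w i := by
  induction n with
  | zero => simp
  | succ n ih => rw [List.ofFn_succ, List.prod_cons, ih, Fin.sum_univ_succ, pow_add]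

variable {m : Type*} [Fintype m] [DecidableEq m]

theorem adaptedBasis_mem_traceZero_pow_weight {F : Type*} [Field F] (hm : (Fintype.card m : F) ≠ 0)
    (i : Unit ⊕ Fin (finrank F (traceZero m F))) :
    adaptedBasis hm i ∈ traceZero m F ^ weight i := by
  rcases i with t | j
  · rw [adaptedBasis_inl, weight, Sum.elim_inl, pow_zero]
    exact Submodule.one_le.1 le_rfl
  · rw [weight, Sum.elim_inr, pow_one]
    exact adaptedBasis_inr_mem hm j

theorem commutator_mem_traceZero_pow_weight {R : Type*} [CommRing R] (i : Unit ⊕ J)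
    (a x : Matrix m m R) (hx : x ∈ traceZero m R ^ weight i) :
    a * x - x * a ∈ traceZero m R ^ weight i := by
  rcases i with t | j
  · obtain ⟨r, rfl⟩ := Submodule.mem_one.1 hx
    rw [Algebra.commutes, sub_self]
    exact zero_mem _
  · rw [weight, Sum.elim_inr, pow_one, mem_traceZero, trace_sub, trace_mul_comm, sub_self]

end Weight

section Characterization

variable {F : Type*} [Field F] {k : ℕ}

theorem mem_innerDerivationsAlgebra_iff (hk : 2 ≤ k) (hkF : (Fintype.card (Fin k) : F) ≠ 0)
    {u : End F (Matrix (Fin k) (Fin k) F)} :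
    u ∈ innerDerivationsAlgebra F k ↔
      ∀ i, u (adaptedBasis hkF i) ∈ traceZero (Fin k) F ^ weight i := by
  refine ⟨fun hu i => map_mem_of_ad_stable (commutator_mem_traceZero_pow_weight i) hu
    (adaptedBasis_mem_traceZero_pow_weight hkF i), fun h => ?_⟩
  set b := adaptedBasis hkF
  have hb (t : Unit) : b (Sum.inl t) = 1 := adaptedBasis_inl hkF t
  obtain ⟨r, hr⟩ : ∃ r, algebraMap F _ r = u 1 :=
    Submodule.mem_one.1 (hb () ▸ h (Sum.inl ()))
  have hdecomp : u - algebraMap F _ r =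
      ∑ j, (b.coord (Sum.inr j)).smulRight ((u - algebraMap F _ r) (b (Sum.inr j))) := by
    refine b.ext fun i => ?_
    rcases i with t | j
    · have hzero : (u - algebraMap F _ r) (b (Sum.inl t)) = 0 := by
        rw [hb, LinearMap.sub_apply, algebraMap_end_apply, ← hr, Algebra.algebraMap_eq_smul_one,
          sub_self]
      rw [hzero]
      simp
    · simp [Finsupp.single_apply]
  rw [← sub_add_cancel u (algebraMap F _ r), hdecomp]
  refine add_mem (sum_mem fun j _ => ?_) (Subalgebra.algebraMap_mem _ r)
  refine smulRight_mem_of_map_one_eq_zero hk hkF ?_ ?_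
  · rw [← hb ()]
    simp
  · have huj : u (b (Sum.inr j)) ∈ traceZero (Fin k) F := by simpa [weight] using h (Sum.inr j)
    exact sub_mem huj (Submodule.smul_mem _ r (adaptedBasis_inr_mem hkF j))

end Characterization

section MultilinearMaps

open scoped Pointwise in
theorem list_prod_ofFn_eq_span {R A : Type*} [CommSemiring R] [Semiring A] [Algebra R A] {n : ℕ}
    (P : Fin n → Submodule R A) :
    (List.ofFn P).prod = Submodule.span R (List.ofFn fun i => (P i : Set A)).prod := by
  induction n with
  | zero => exact Submodule.one_eq_span
  | succ n ih =>
    rw [List.ofFn_succ, List.prod_cons, ih, List.ofFn_succ, List.prod_cons,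
      ← Submodule.span_mul_span, Submodule.span_eq]

theorem list_prod_ofFn_mem {R A : Type*} [CommSemiring R] [Semiring A] [Algebra R A] {n : ℕ}
    {P : Fin n → Submodule R A} {c : Fin n → A} (hc : ∀ i, c i ∈ P i) :
    (List.ofFn c).prod ∈ (List.ofFn P).prod := by
  rw [list_prod_ofFn_eq_span]
  exact Submodule.subset_span (Set.mem_prod_list_ofFn.2 ⟨fun i => ⟨c i, hc i⟩, rfl⟩)

variable {R ι M N A : Type*} [CommSemiring R] [AddCommMonoid M] [Module R M] [AddCommMonoid N]
  [Module R N] [Semiring A] [Algebra R A] [Fintype ι] {n : ℕ}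

/-- Evaluation of multilinear maps on the words `v : Fin n → ι` in the basis `b`, as a linear
equivalence: the values of a multilinear map on these words determine it and are arbitrary. -/
noncomputable def evalBasis (b : Basis ι R M) (n : ℕ) :
    MultilinearMap R (fun _ : Fin n => M) N ≃ₗ[R] ((Fin n → ι) → N) where
  toFun f v := f fun i => b (v i)
  map_add' _ _ := rfl
  map_smul' _ _ := rfl
  invFun g := ∑ v, ((MultilinearMap.mkPiAlgebra R (Fin n) R).compLinearMap
    fun i => b.coord (v i)).smulRight (g v)
  left_inv f := by
    classical
    refine Basis.ext_multilinear (fun _ => b) fun w => ?_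
    simp [Finsupp.single_apply, Finset.prod_ite_zero, ← funext_iff]
  right_inv g := by
    classical
    ext w
    simp [Finsupp.single_apply, Finset.prod_ite_zero, ← funext_iff]

theorem evalBasis_apply (b : Basis ι R M) (f : MultilinearMap R (fun _ : Fin n => M) N)
    (v : Fin n → ι) : evalBasis b n f v = f fun i => b (v i) :=
  rfl

theorem finrank_comap_evalBasis_pi {F : Type*} [Field F] [Module F M]
    {V : Type*} [AddCommGroup V] [Module F V] [FiniteDimensional F V] (b : Basis ι F M)
    (Q : (Fin n → ι) → Submodule F V) :
    finrank F ((Submodule.pi Set.univ Q).comap (evalBasis (N := V) b n).toLinearMap) =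
      ∑ v, finrank F (Q v) := by
  have hrange : LinearMap.range (LinearMap.piMap fun v => (Q v).subtype) =
      Submodule.pi Set.univ Q := by
    ext g
    simp only [LinearMap.mem_range, Submodule.mem_pi, Set.mem_univ, true_imp_iff]
    exact ⟨fun ⟨x, hx⟩ v => hx ▸ (x v).2, fun hg => ⟨fun v => ⟨g v, hg v⟩, rfl⟩⟩
  rw [((evalBasis b n).ofSubmodule' _).finrank_eq, ← hrange, LinearMap.finrank_range_of_inj,
    finrank_pi_fintype]
  exact Function.Injective.piMap fun v => (Q v).injective_subtype

theorem evalBasis_mkPiAlgebraFin_compLinearMap_smulRight [DecidableEq ι] (b : Basis ι R M)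
    (v : Fin n → ι) (c : Fin n → A) :
    evalBasis b n ((MultilinearMap.mkPiAlgebraFin R n A).compLinearMap
      fun i => (b.coord (v i)).smulRight (c i)) = Pi.single v (List.ofFn c).prod := by
  ext w
  simp only [evalBasis_apply, MultilinearMap.compLinearMap_apply, LinearMap.smulRight_apply,
    MultilinearMap.map_smul_univ, MultilinearMap.mkPiAlgebraFin_apply]
  simp [Finsupp.single_apply, Finset.prod_ite_zero, ← funext_iff, Pi.single_apply]

theorem span_mkPiAlgebraFin_compLinearMap_eq_comap (b : Basis ι R M) (Q : ι → Submodule R A) :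
    Submodule.span R {g | ∃ u : Fin n → M →ₗ[R] A, (∀ i j, u i (b j) ∈ Q j) ∧
        (MultilinearMap.mkPiAlgebraFin R n A).compLinearMap u = g} =
      (Submodule.pi Set.univ fun v : Fin n → ι => (List.ofFn fun i => Q (v i)).prod).comap
        (evalBasis (N := A) b n).toLinearMap := by
  classical
  apply le_antisymm
  · refine Submodule.span_le.2 ?_
    rintro _ ⟨u, hu, rfl⟩ v -
    exact list_prod_ofFn_mem fun i => hu i (v i)
  · intro f hf
    set S : Submodule R (MultilinearMap R (fun _ : Fin n => M) A) := Submodule.span R _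
    have hsingle (v : Fin n → ι) : (List.ofFn fun i => Q (v i)).prod ≤
        S.comap ((evalBasis b n).symm.toLinearMap ∘ₗ LinearMap.single R _ v) := by
      rw [list_prod_ofFn_eq_span, Submodule.span_le]
      intro a ha
      obtain ⟨c, rfl⟩ := Set.mem_prod_list_ofFn.1 ha
      refine Submodule.subset_span ⟨fun i => (b.coord (v i)).smulRight (c i : A), fun i j => ?_,
        (evalBasis b n).injective ?_⟩
      · by_cases hj : j = v i <;> simp [hj]
      · simp [evalBasis_mkPiAlgebraFin_compLinearMap_smulRight]
    rw [← (evalBasis b n).symm_apply_apply f, ← Finset.univ_sum_single (evalBasis b n f), map_sum]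
    exact S.sum_mem fun v _ => hsingle v (hf v trivial)

end MultilinearMaps
section Codimension

variable {F : Type*} [Field F] {k : ℕ}

theorem diffMultilinearSpan_eq_comap (hk : 2 ≤ k) (hkF : (Fintype.card (Fin k) : F) ≠ 0) (n : ℕ) :
    diffMultilinearSpan F k n =
      (Submodule.pi Set.univ fun v => traceZero (Fin k) F ^ ∑ i, weight (v i)).comap
        (evalBasis (adaptedBasis hkF) n).toLinearMap := by
  apply le_antisymm
  · refine Submodule.span_le.2 ?_
    rintro _ ⟨σ, u, rfl⟩ v -
    have hmem := list_prod_ofFn_mem fun i =>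
      (mem_innerDerivationsAlgebra_iff hk hkF).1 (u i).2 (v (σ i))
    rwa [list_prod_ofFn_pow, Equiv.sum_comp σ fun i => weight (v i)] at hmem
  · simp_rw [← list_prod_ofFn_pow]
    rw [← span_mkPiAlgebraFin_compLinearMap_eq_comap (adaptedBasis hkF)
      fun i => traceZero (Fin k) F ^ weight i]
    refine Submodule.span_mono ?_
    rintro _ ⟨u, hu, rfl⟩
    exact ⟨1, fun i => ⟨u i, (mem_innerDerivationsAlgebra_iff hk hkF).2 (hu i)⟩, rfl⟩

theorem finrank_quotient_traceZero {m : Type*} [Fintype m]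
    (hm : (Fintype.card m : F) ≠ 0) : finrank F (Matrix m m F ⧸ traceZero m F) = 1 := by
  have hsub := finrank_traceZero_add_one hm
  have hquot := (traceZero m F).finrank_quotient_add_finrank
  rw [finrank_matrix, finrank_self, mul_one, ← pow_two] at hquot
  omega

theorem finrank_quotient_one_add_one {m : Type*} [Fintype m] [DecidableEq m]
    (hm : (Fintype.card m : F) ≠ 0) :
    finrank F (Matrix m m F ⧸ (1 : Submodule F (Matrix m m F))) + 1 = Fintype.card m ^ 2 := by
  have hquot := (1 : Submodule F (Matrix m m F)).finrank_quotient_add_finrank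
  have hone : finrank F (1 : Submodule F (Matrix m m F)) = 1 := by
    rw [Submodule.one_eq_span, finrank_span_singleton (matrix_one_ne_zero hm)]
  rwa [hone, finrank_matrix, finrank_self, mul_one, ← pow_two] at hquot

theorem sum_finrank_quotient_traceZero_pow (hk : 2 ≤ k) (hkF : (Fintype.card (Fin k) : F) ≠ 0)
    (n : ℕ) :
    ∑ v : Fin n → Unit ⊕ Fin (finrank F (traceZero (Fin k) F)),
      finrank F (Matrix (Fin k) (Fin k) F ⧸ traceZero (Fin k) F ^ ∑ i, weight (v i)) =
        (k ^ 2 - 1) * (n + 1) := by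
  have : Nontrivial (Fin k) := Fin.nontrivial_iff_two_le.2 hk
  have htop (s : ℕ) :
      finrank F (Matrix (Fin k) (Fin k) F ⧸ traceZero (Fin k) F ^ (s + 2)) = 0 := by
    rw [traceZero_pow_add_two, finrank_zero_iff]
    infer_instance
  have hone := finrank_quotient_one_add_one hkF
  have htraceZero := finrank_traceZero_add_one hkF
  rw [Fintype.card_fin] at hone htraceZero
  rw [sum_apply_sum_weight
    (h := fun s => finrank F (Matrix (Fin k) (Fin k) F ⧸ traceZero (Fin k) F ^ s)) htop, pow_zero,
    pow_one, finrank_quotient_traceZero hkF, Fintype.card_fin, Nat.eq_sub_of_add_eq hone,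
    Nat.eq_sub_of_add_eq htraceZero, smul_eq_mul, mul_one, mul_add_one, mul_comm, add_comm]

theorem finrank_diffMultilinearSpan_add (hk : 2 ≤ k) (hkF : (Fintype.card (Fin k) : F) ≠ 0)
    (n : ℕ) :
    finrank F (diffMultilinearSpan F k n) + (k ^ 2 - 1) * (n + 1) = k ^ (2 * (n + 1)) := by
  have hcard : Fintype.card (Unit ⊕ Fin (finrank F (traceZero (Fin k) F))) = k ^ 2 := by
    rw [Fintype.card_sum, Fintype.card_unit, Fintype.card_fin, add_comm,
      finrank_traceZero_add_one hkF, Fintype.card_fin]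
  rw [diffMultilinearSpan_eq_comap hk hkF, finrank_comap_evalBasis_pi,
    ← sum_finrank_quotient_traceZero_pow hk hkF, ← Finset.sum_add_distrib]
  simp only [add_comm (finrank F (_ : Submodule F _)), Submodule.finrank_quotient_add_finrank]
  rw [Finset.sum_const, Finset.card_univ, Fintype.card_fun, hcard, Fintype.card_fin,
    finrank_matrix, Fintype.card_fin, finrank_self, smul_eq_mul]
  ring

end Codimension

section Growth

theorem tendsto_rpow_inv_natCast_of_le_of_le {c : ℕ → ℝ} {q A B : ℝ} (hq : 0 < q) (hA : 0 < A)
    (hB : 0 < B) (hlower : ∀ n, A * q ^ n ≤ c n) (hupper : ∀ n, c n ≤ B * q ^ n) :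
    Tendsto (fun n : ℕ => c n ^ (n : ℝ)⁻¹) atTop (𝓝 q) := by
  have hlim {C : ℝ} (hC : 0 < C) :
      Tendsto (fun n : ℕ => (C * q ^ n) ^ (n : ℝ)⁻¹) atTop (𝓝 q) := by
    have hroot : Tendsto (fun n : ℕ => C ^ (n : ℝ)⁻¹ * q) atTop (𝓝 q) := by
      simpa using ((Real.continuous_const_rpow hC.ne').tendsto 0 |>.comp
        tendsto_inv_atTop_nhds_zero_nat).mul_const q
    refine hroot.congr' ?_
    filter_upwards [eventually_ne_atTop 0] with n hn
    rw [Real.mul_rpow hC.le (pow_nonneg hq.le n), Real.pow_rpow_inv_natCast hq.le hn]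
  refine tendsto_of_tendsto_of_tendsto_of_le_of_le (hlim hA) (hlim hB) (fun n => ?_) fun n => ?_
  · exact Real.rpow_le_rpow (by positivity) (hlower n) (by positivity)
  · have hnonneg : 0 ≤ c n := (by positivity : 0 ≤ A * q ^ n).trans (hlower n)
    exact Real.rpow_le_rpow hnonneg (hupper n) (by positivity)

theorem pow_le_of_add_sub_one_mul_eq {q c n : ℕ} (hq : 2 ≤ q)
    (hc : c + (q - 1) * (n + 1) = q ^ (n + 1)) : q ^ n ≤ c := by
  obtain ⟨p, rfl⟩ := Nat.exists_eq_add_of_le' (one_le_two.trans hq)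
  have hn : n + 1 ≤ (p + 1) ^ n := Nat.lt_pow_self hq
  have hmul := Nat.mul_le_mul_left p hn
  rw [Nat.add_sub_cancel, pow_succ', add_one_mul] at hc
  omega

end Growth

end DifferentialCodimension

theorem differential_exponent_of_matrix_algebra_general
    (F : Type*) [Field F] (k : ℕ) (hk : 2 ≤ k) (hkF : (k : F) ≠ 0) :
    (∀ n : ℕ, Module.finrank F (diffMultilinearSpan F k n)
      = k ^ (2 * (n + 1)) - (k ^ 2 - 1) * (n + 1)) ∧
    Filter.Tendsto
      (fun n : ℕ => (Module.finrank F (diffMultilinearSpan F k n) : ℝ) ^ ((n : ℝ)⁻¹))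
      Filter.atTop (nhds ((k : ℝ) ^ 2)) := by
  have hcodim := DifferentialCodimension.finrank_diffMultilinearSpan_add (F := F) hk
    (by rwa [Fintype.card_fin])
  have hq : 2 ≤ k ^ 2 := hk.trans (Nat.le_self_pow two_ne_zero k)
  refine ⟨fun n => Nat.eq_sub_of_add_eq (hcodim n),
    DifferentialCodimension.tendsto_rpow_inv_natCast_of_le_of_le (A := 1) (B := k ^ 2)
      (by positivity) one_pos (by positivity) (fun n => ?_) fun n => ?_⟩
  · rw [one_mul]
    exact_mod_cast DifferentialCodimension.pow_le_of_add_sub_one_mul_eq hq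
      ((hcodim n).trans (pow_mul k 2 (n + 1)))
  · rw [← pow_succ', ← pow_mul]
    exact_mod_cast Nat.le.intro (hcodim n)

/-- Let `F` be a field of characteristic zero and `k ≥ 2`.  The differential
PI-exponent of `M_k(F)` with respect to the Lie algebra of all its derivations equals `k²`:
the `n`-th differential codimension equals `k^{2(n+1)} − (k² − 1)(n + 1)` for `n ≥ 1`, and the
limit of its `n`-th root as `n → ∞` exists and equals `k²`. -/
theorem differential_exponent_of_matrix_algebra
    (F : Type*) [Field F] [CharZero F] (k : ℕ) (hk : 2 ≤ k) :
    (∀ n : ℕ, 1 ≤ n → Module.finrank F (diffMultilinearSpan F k n)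
      = k ^ (2 * (n + 1)) - (k ^ 2 - 1) * (n + 1)) ∧
    Filter.Tendsto
      (fun n : ℕ => (Module.finrank F (diffMultilinearSpan F k n) : ℝ) ^ ((n : ℝ)⁻¹))
      Filter.atTop (nhds ((k : ℝ) ^ 2)) := by
  have hkF : (k : F) ≠ 0 := Nat.cast_ne_zero.2 (two_pos.trans_le hk).ne'
  obtain ⟨hcodim, hlim⟩ := differential_exponent_of_matrix_algebra_general F k hk hkF
  exact ⟨fun n _ => hcodim n, hlim⟩
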